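/- (Eigenvalue reformulation of the Lagrangian dual of eTRS) Since A is not positive definite, the Lagrangian dual value of eTRS satisfies d* = sup over t ∈ ℝ and λ ≥ 0 of k(t,λ) := (Δ + 1)·λmin(D(t,λ)) − t − λc; moreover the constraint λmin(D(t,λ)) ≤ 0 is automatically satisfied (λmin(D(t,λ)) ≤ λmin(A) ≤ 0 for all t, λ). -/

import Mathlib

open Matrix

/-- The smallest eigenvalue of a real (symmetric) matrix. -/
noncomputable def lambdaMin {ι : Type} [Fintype ι] (M : Matrix ι ι ℝ) : ℝ :=
  sInf {μ : ℝ | ∃ v : ι → ℝ, v ≠ 0 ∧ M.mulVec v = μ • v}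

/-- The multiplicity of the smallest eigenvalue: the dimension of Null(M - λmin(M)·I). -/
noncomputable def eigMult {ι : Type} [Fintype ι] [DecidableEq ι] (M : Matrix ι ι ℝ) : ℕ :=
  Module.finrank ℝ (LinearMap.ker (M - lambdaMin M • (1 : Matrix ι ι ℝ)).mulVecLin)

/-- The bordered matrix D(t) = [[t, -aᵀ],[-a, A]]. -/
noncomputable def borderD {n : ℕ} (A : Matrix (Fin n) (Fin n) ℝ) (a : Fin n → ℝ) (t : ℝ) :
    Matrix (Unit ⊕ Fin n) (Unit ⊕ Fin n) ℝ :=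
  Matrix.fromBlocks (Matrix.of fun (_ : Unit) (_ : Unit) => t)
    (Matrix.of fun (_ : Unit) (j : Fin n) => -a j)
    (Matrix.of fun (i : Fin n) (_ : Unit) => -a i) A

/-- The bordered matrix D(t,λ) = [[t, (-a + (λ/2)b)ᵀ],[-a + (λ/2)b, A]]. -/
noncomputable def borderD2 {n : ℕ} (A : Matrix (Fin n) (Fin n) ℝ) (a b : Fin n → ℝ)
    (t l : ℝ) : Matrix (Unit ⊕ Fin n) (Unit ⊕ Fin n) ℝ :=
  borderD A (fun j => a j - (l / 2) * b j) t

/-- The objective xᵀAx - 2aᵀx. -/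
noncomputable def objQ {n : ℕ} (A : Matrix (Fin n) (Fin n) ℝ) (a : Fin n → ℝ)
    (x : Fin n → ℝ) : ℝ :=
  x ⬝ᵥ A.mulVec x - 2 * (a ⬝ᵥ x)

/-- The optimal value p* of eTRS. -/
noncomputable def pstar {n : ℕ} (A : Matrix (Fin n) (Fin n) ℝ) (a b : Fin n → ℝ)
    (c Δ : ℝ) : ℝ :=
  sInf {v : ℝ | ∃ x : Fin n → ℝ, x ⬝ᵥ x ≤ Δ ∧ b ⬝ᵥ x ≤ c ∧ v = objQ A a x}

/-- The Lagrangian of eTRS. -/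
noncomputable def lagr {n : ℕ} (A : Matrix (Fin n) (Fin n) ℝ) (a b : Fin n → ℝ)
    (c Δ : ℝ) (x : Fin n → ℝ) (l1 l2 : ℝ) : ℝ :=
  objQ A a x + l1 * (x ⬝ᵥ x - Δ) + l2 * (b ⬝ᵥ x - c)

/-- The Lagrangian dual value d* of eTRS:
the supremum over λ1, λ2 ≥ 0 of inf_x of the Lagrangian, encoded as the supremum of all
values that are lower bounds of the Lagrangian for some admissible multipliers. -/
noncomputable def dstar {n : ℕ} (A : Matrix (Fin n) (Fin n) ℝ) (a b : Fin n → ℝ)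
    (c Δ : ℝ) : ℝ :=
  sSup {v : ℝ | ∃ l1 l2 : ℝ, 0 ≤ l1 ∧ 0 ≤ l2 ∧ ∀ x : Fin n → ℝ, v ≤ lagr A a b c Δ x l1 l2}

/-- x is a global optimal solution of eTRS. -/
def isOptimal {n : ℕ} (A : Matrix (Fin n) (Fin n) ℝ) (a b : Fin n → ℝ)
    (c Δ : ℝ) (x : Fin n → ℝ) : Prop :=
  x ⬝ᵥ x ≤ Δ ∧ b ⬝ᵥ x ≤ c ∧
    ∀ y : Fin n → ℝ, y ⬝ᵥ y ≤ Δ → b ⬝ᵥ y ≤ c → objQ A a x ≤ objQ A a y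

/-- The dual objective k(t,λ) = (Δ+1)·λmin(D(t,λ)) - t - λc. -/
noncomputable def ktl {n : ℕ} (A : Matrix (Fin n) (Fin n) ℝ) (a b : Fin n → ℝ)
    (c Δ : ℝ) (t l : ℝ) : ℝ :=
  (Δ + 1) * lambdaMin (borderD2 A a b t l) - t - l * c

/-!
A quadratic function `xᵀ B x - 2 dᵀ x + τ` is nonnegative everywhere exactly when its
homogenization, the bordered matrix with corner `τ`, border `-d` and block `B`, is positive
semidefinite. The Lagrangian at `(l1, l2)` minus the number `-(Δ + 1) l1 - t - l2 c` is such a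
quadratic, with `B = A + l1 I`, `d = a - (l2 / 2) b` and `τ = t + l1`, and its homogenization is
`D(t, l2) + l1 I`. So this number bounds the Lagrangian from below exactly when
`-l1 ≤ λmin(D(t, l2))`. For fixed `t` and `l2` the bound is best at `l1 = -λmin(D(t, l2))`, where it
equals `k(t, l2)`; this multiplier is nonnegative because interlacing gives
`λmin(D(t, l2)) ≤ λmin(A) ≤ 0`.
-/

section LambdaMin

variable {ι κ : Type} [Fintype ι] [Fintype κ]

lemma lambdaMin_eq_sInf_spectrum [DecidableEq ι] (M : Matrix ι ι ℝ) :
    lambdaMin M = sInf (spectrum ℝ M) := by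
  have h_eigenvalue (μ : ℝ) : (∃ v : ι → ℝ, v ≠ 0 ∧ M *ᵥ v = μ • v) ↔ μ ∈ spectrum ℝ M := by
    rw [← Matrix.spectrum_toLin', ← Module.End.hasEigenvalue_iff_mem_spectrum,
      Module.End.hasEigenvalue_iff, Submodule.ne_bot_iff]
    simp only [Module.End.mem_eigenspace_iff, Matrix.toLin'_apply, and_comm]
  simp only [lambdaMin, h_eigenvalue, Set.ofPred_mem_eq]

open scoped MatrixOrder in
lemma le_lambdaMin_iff_posSemidef [DecidableEq ι] [Nonempty ι] {M : Matrix ι ι ℝ}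
    (hM : M.IsHermitian) {r : ℝ} : r ≤ lambdaMin M ↔ (M - r • 1).PosSemidef := by
  have h_nonempty : (spectrum ℝ M).Nonempty := by
    rw [hM.spectrum_real_eq_range_eigenvalues]
    exact Set.range_nonempty _
  rw [lambdaMin_eq_sInf_spectrum, le_csInf_iff M.finite_real_spectrum.bddBelow h_nonempty,
    ← algebraMap_le_iff_le_spectrum hM.isSelfAdjoint, Matrix.le_iff,
    Algebra.algebraMap_eq_smul_one]

lemma lambdaMin_le_lambdaMin_submatrix [Nonempty κ] {M : Matrix ι ι ℝ} (hM : M.IsHermitian)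
    {f : κ → ι} (hf : Function.Injective f) : lambdaMin M ≤ lambdaMin (M.submatrix f f) := by
  classical
  have : Nonempty ι := ‹Nonempty κ›.map f
  have h_submatrix : (M - lambdaMin M • 1).submatrix f f = M.submatrix f f - lambdaMin M • 1 := by
    rw [← Matrix.submatrix_one f hf]
    rfl
  rw [le_lambdaMin_iff_posSemidef (hM.submatrix f), ← h_submatrix]
  exact ((le_lambdaMin_iff_posSemidef hM).1 le_rfl).submatrix f

lemma posDef_of_lambdaMin_pos [Nonempty ι] {M : Matrix ι ι ℝ} (hM : M.IsHermitian)
    (h : 0 < lambdaMin M) : M.PosDef := by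
  classical
  simpa using (Matrix.PosDef.one.smul h).add_posSemidef ((le_lambdaMin_iff_posSemidef hM).1 le_rfl)

end LambdaMin

section Homogenization

variable {n : ℕ} {A : Matrix (Fin n) (Fin n) ℝ}

lemma isHermitian_borderD (hA : A.IsHermitian) (d : Fin n → ℝ) (t : ℝ) :
    (borderD A d t).IsHermitian := by
  refine Matrix.isHermitian_fromBlocks_iff.2 ⟨?_, ?_, ?_, hA⟩ <;> ext <;> simp

lemma lambdaMin_borderD_le [NeZero n] (hA : A.IsHermitian) (d : Fin n → ℝ) (t : ℝ) :
    lambdaMin (borderD A d t) ≤ lambdaMin A :=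
  lambdaMin_le_lambdaMin_submatrix (isHermitian_borderD hA d t) Sum.inr_injective

lemma borderD_sub_smul_one (A : Matrix (Fin n) (Fin n) ℝ) (d : Fin n → ℝ) (t r : ℝ) :
    borderD A d t - r • 1 = borderD (A - r • 1) d (t - r) := by
  ext (i | i) (j | j) <;> simp [borderD, Matrix.one_apply]

lemma sumElim_dotProduct_borderD_mulVec (A : Matrix (Fin n) (Fin n) ℝ) (d : Fin n → ℝ)
    (t s : ℝ) (x : Fin n → ℝ) :
    Sum.elim (fun _ => s) x ⬝ᵥ borderD A d t *ᵥ Sum.elim (fun _ => s) x =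
      t * s ^ 2 - 2 * s * (d ⬝ᵥ x) + x ⬝ᵥ A *ᵥ x := by
  have h_corner : (Matrix.of fun (_ : Unit) (_ : Unit) => t) *ᵥ (fun _ => s) = fun _ => t * s := by
    ext; simp [Matrix.mulVec, dotProduct]
  have h_row : (Matrix.of fun (_ : Unit) j => -d j) *ᵥ x = fun _ => -(d ⬝ᵥ x) := by
    ext; simp [Matrix.mulVec, dotProduct]
  have h_col : (Matrix.of fun i (_ : Unit) => -d i) *ᵥ (fun _ => s) = -s • d := by
    ext; simp [Matrix.mulVec, dotProduct, mul_comm]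
  rw [borderD, Matrix.fromBlocks_mulVec, sumElim_dotProduct_sumElim]
  simp only [Sum.elim_comp_inl, Sum.elim_comp_inr, h_corner, h_row, h_col, dotProduct_add,
    dotProduct_smul, smul_eq_mul, dotProduct_comm x d]
  simp only [dotProduct, Finset.univ_unique, Finset.sum_singleton]
  ring

lemma objQ_smul (A : Matrix (Fin n) (Fin n) ℝ) (d : Fin n → ℝ) (r : ℝ) (x : Fin n → ℝ) :
    objQ A d (r • x) = r ^ 2 * (x ⬝ᵥ A *ᵥ x) - 2 * r * (d ⬝ᵥ x) := by
  simp only [objQ, Matrix.mulVec_smul, dotProduct_smul, smul_dotProduct, smul_eq_mul]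
  ring

lemma posSemidef_borderD_iff (hA : A.IsHermitian) {d : Fin n → ℝ} {t : ℝ} :
    (borderD A d t).PosSemidef ↔ ∀ x, 0 ≤ objQ A d x + t := by
  refine ⟨fun h x => ?_, fun h => .of_dotProduct_mulVec_nonneg (isHermitian_borderD hA d t) ?_⟩
  · have h_one := h.dotProduct_mulVec_nonneg (Sum.elim (fun _ => 1) x)
    rw [star_trivial, sumElim_dotProduct_borderD_mulVec] at h_one
    rw [objQ]
    linarith
  · intro y
    obtain ⟨s, x, rfl⟩ : ∃ s x, y = Sum.elim (fun _ => s) x :=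
      ⟨y (.inl ()), y ∘ .inr, (Sum.elim_comp_inl_inr y).symm⟩
    rw [star_trivial, sumElim_dotProduct_borderD_mulVec]
    -- Dehomogenize where `s ≠ 0`; the hyperplane `s = 0` at infinity follows by continuity in `s`.
    refine (dense_compl_singleton (0 : ℝ)).induction (fun s (hs : s ≠ 0) => ?_)
      (isClosed_le continuous_const (by fun_prop)) s
    calc 0 ≤ s ^ 2 * (objQ A d (s⁻¹ • x) + t) := mul_nonneg (sq_nonneg s) (h _)
      _ = t * s ^ 2 - 2 * s * (d ⬝ᵥ x) + x ⬝ᵥ A *ᵥ x := by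
        rw [objQ_smul]
        field_simp
        ring

end Homogenization

section LagrangianDual

variable {n : ℕ} {A : Matrix (Fin n) (Fin n) ℝ}

lemma lagr_eq_objQ (A : Matrix (Fin n) (Fin n) ℝ) (a b : Fin n → ℝ) (c Δ : ℝ) (x : Fin n → ℝ)
    (l1 l2 : ℝ) :
    lagr A a b c Δ x l1 l2 =
      objQ (A + l1 • 1) (fun j => a j - l2 / 2 * b j) x - l1 * Δ - l2 * c := by
  have h_linear : (fun j => a j - l2 / 2 * b j) ⬝ᵥ x = a ⬝ᵥ x - l2 / 2 * (b ⬝ᵥ x) := by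
    rw [← smul_eq_mul, ← smul_dotProduct, ← sub_dotProduct]
    rfl
  simp only [lagr, objQ, Matrix.add_mulVec, Matrix.smul_mulVec, Matrix.one_mulVec, dotProduct_add,
    dotProduct_smul, smul_eq_mul, h_linear]
  ring

lemma forall_le_lagr_iff (hA : A.IsHermitian) {a b : Fin n → ℝ} {c Δ t l1 l2 : ℝ} :
    (∀ x, (Δ + 1) * -l1 - t - l2 * c ≤ lagr A a b c Δ x l1 l2) ↔
      -l1 ≤ lambdaMin (borderD2 A a b t l2) := by
  have h_shift : (A + l1 • (1 : Matrix (Fin n) (Fin n) ℝ)).IsHermitian :=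
    hA.add (Matrix.isHermitian_one.smul (IsSelfAdjoint.all l1))
  rw [borderD2, le_lambdaMin_iff_posSemidef (isHermitian_borderD hA _ t), borderD_sub_smul_one,
    neg_smul, sub_neg_eq_add, sub_neg_eq_add, posSemidef_borderD_iff h_shift]
  refine forall_congr' fun x => ?_
  rw [lagr_eq_objQ]
  constructor <;> intro h <;> linarith

lemma ktl_le_lagr (hA : A.IsHermitian) (a b : Fin n → ℝ) (c Δ t l : ℝ) (x : Fin n → ℝ) :
    ktl A a b c Δ t l ≤ lagr A a b c Δ x (-lambdaMin (borderD2 A a b t l)) l := by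
  simpa only [ktl, neg_neg] using (forall_le_lagr_iff hA).2 (neg_neg (lambdaMin _)).le x

lemma exists_le_ktl_of_forall_le_lagr (hA : A.IsHermitian) {a b : Fin n → ℝ} {c Δ l1 l2 v : ℝ}
    (hΔ : 0 ≤ Δ + 1) (hv : ∀ x, v ≤ lagr A a b c Δ x l1 l2) : ∃ t, v ≤ ktl A a b c Δ t l2 := by
  obtain ⟨t, rfl⟩ : ∃ t, v = (Δ + 1) * -l1 - t - l2 * c :=
    ⟨(Δ + 1) * -l1 - l2 * c - v, by ring⟩
  refine ⟨t, ?_⟩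
  unfold ktl
  gcongr
  exact (forall_le_lagr_iff hA).1 hv

end LagrangianDual

/-- The eigenvalue reformulation of the Lagrangian dual of eTRS,
and redundancy of the constraint λmin(D(t,λ)) ≤ 0. -/
theorem stmt6 {n : ℕ} (hn : 1 ≤ n) (A : Matrix (Fin n) (Fin n) ℝ) (hA : A.IsHermitian)
    (hnpd : ¬ A.PosDef) (a b : Fin n → ℝ) (c Δ : ℝ) (hΔ : 0 < Δ) :
    (∀ t l : ℝ, lambdaMin (borderD2 A a b t l) ≤ lambdaMin A ∧ lambdaMin A ≤ 0) ∧
    dstar A a b c Δ = sSup {v : ℝ | ∃ t l : ℝ, 0 ≤ l ∧ v = ktl A a b c Δ t l} := by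
  have : NeZero n := ⟨Nat.one_le_iff_ne_zero.1 hn⟩
  have h_border : ∀ t l, lambdaMin (borderD2 A a b t l) ≤ lambdaMin A :=
    fun t _ => lambdaMin_borderD_le hA _ t
  have h_nonpos : lambdaMin A ≤ 0 := not_lt.1 (mt (posDef_of_lambdaMin_pos hA) hnpd)
  refine ⟨fun t l => ⟨h_border t l, h_nonpos⟩, csSup_eq_csSup_of_forall_exists_le ?_ ?_⟩
  · rintro v ⟨l1, l2, -, hl2, hv⟩
    obtain ⟨t, ht⟩ := exists_le_ktl_of_forall_le_lagr hA (by linarith) hv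
    exact ⟨_, ⟨t, l2, hl2, rfl⟩, ht⟩
  · rintro _ ⟨t, l, hl, rfl⟩
    exact ⟨_, ⟨_, l, neg_nonneg.2 ((h_border t l).trans h_nonpos), hl, ktl_le_lagr hA a b c Δ t l⟩,
      le_rfl⟩
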